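/- Let Ω ⊂ ℝ^d be a bounded domain, T > 0, Ω_T = (0,T) × Ω, M an N-function on Ω_T with convex conjugate M*, and let A : Ω_T × ℝ^d → ℝ^d satisfy: (A1) A is a Carathéodory function; (A2) there are c > 0 and h ∈ L^∞(Ω_T) with M(t,x,ξ) + M*(t,x, A(t,x,ξ)) ≤ c·A(t,x,ξ)·ξ + h(t,x) for a.e. (t,x) and all ξ; (A3) (A(t,x,ξ) − A(t,x,η))·(ξ − η) ≥ 0 for all ξ, η and a.e. (t,x); (A4) A(t,x,0) = 0 for a.e. (t,x). Assume α : Ω_T → ℝ^d is measurable with ∫_{Ω_T} M*(t,x, α/λ₁) dt dx < ∞ for some λ₁ > 0, and ξ : Ω_T → ℝ^d is measurable with ∫_{Ω_T} M(t,x, ξ/λ₂) dt dx < ∞ for some λ₂ > 0, and suppose that for every bounded measurable η : Ω_T → ℝ^d and every ψ ∈ C_c^∞(Ω) with 0 ≤ ψ ≤ 1, ∫_{Ω_T} (α(t,x) − A(t,x, η(t,x)))·(ξ(t,x) − η(t,x))·ψ(x) dt dx ≥ 0. Then A(t,x, ξ(t,x)) = α(t,x) for a.e. (t,x) ∈ Ω_T.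 -/

import Mathlib

open Filter Set MeasureTheory

/-- A Young function: `m : [0,∞) → [0,∞)` with `m(s) = 0 ↔ s = 0`, convex,
and superlinear: `m(s)/s → 0` as `s → 0⁺` and `m(s)/s → ∞` as `s → ∞`. -/
def IsYoung (m : ℝ → ℝ) : Prop :=
  (∀ s, 0 ≤ s → 0 ≤ m s) ∧
  (∀ s, 0 ≤ s → (m s = 0 ↔ s = 0)) ∧
  ConvexOn ℝ (Set.Ici 0) m ∧
  Tendsto (fun s => m s / s) (nhdsWithin 0 (Set.Ioi 0)) (nhds 0) ∧
  Tendsto (fun s => m s / s) atTop atTop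

/-- The measure on `Ω_T = (0,T) × Ω` (Lebesgue measure restricted to `(0,T) × Ω`). -/
noncomputable def parMeasure {d : ℕ} (Ω : Set (EuclideanSpace ℝ (Fin d))) (T : ℝ) :
    Measure (ℝ × EuclideanSpace ℝ (Fin d)) :=
  volume.restrict (Set.Ioo 0 T ×ˢ Ω)

/-- An `N`-function on `Ω_T`: even and convex in `ξ`, Carathéodory, and sandwiched between
two Young functions. -/
def IsNFunction {d : ℕ} (μ : Measure (ℝ × EuclideanSpace ℝ (Fin d)))
    (M : ℝ × EuclideanSpace ℝ (Fin d) → EuclideanSpace ℝ (Fin d) → ℝ) : Prop :=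
  (∀ᵐ p ∂μ, ∀ ξ, M p ξ = M p (-ξ)) ∧
  (∀ᵐ p ∂μ, Continuous (M p)) ∧
  (∀ ξ, Measurable fun p => M p ξ) ∧
  (∀ᵐ p ∂μ, ConvexOn ℝ Set.univ (M p)) ∧
  ∃ m₁ m₂, IsYoung m₁ ∧ IsYoung m₂ ∧
    ∀ᵐ p ∂μ, ∀ ξ, m₁ ‖ξ‖ ≤ M p ξ ∧ M p ξ ≤ m₂ ‖ξ‖

/-- The convex conjugate `M*(t,x,η) = sup_{ξ ∈ ℝ^d} (ξ·η − M(t,x,ξ))`. -/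
noncomputable def nConj {d : ℕ}
    (M : ℝ × EuclideanSpace ℝ (Fin d) → EuclideanSpace ℝ (Fin d) → ℝ)
    (p : ℝ × EuclideanSpace ℝ (Fin d)) (η : EuclideanSpace ℝ (Fin d)) : ℝ :=
  sSup (Set.range fun ξ => (@inner ℝ _ _ ξ η) - M p ξ)

lemma cara_aemeas {X E F : Type*} [MeasurableSpace X] {μ : Measure X}
    [TopologicalSpace E] [TopologicalSpace.MetrizableSpace E]
    [SecondCountableTopology E] [MeasurableSpace E] [OpensMeasurableSpace E]
    [TopologicalSpace F] [TopologicalSpace.PseudoMetrizableSpace F] [MeasurableSpace F]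
    [BorelSpace F] [Zero F] (G : X → E → F) (hc : ∀ᵐ p ∂μ, Continuous (G p))
    (hm : ∀ e, Measurable fun p => G p e) (η : X → E) (hη : Measurable η) :
    AEMeasurable (fun p => G p (η p)) μ := by
  classical
  obtain ⟨S, hS, hSm, hS0⟩ := exists_measurable_superset_of_null (ae_iff.1 hc)
  let G' : E → X → F := fun e p => if p ∈ S then 0 else G p e
  have h1 : Measurable (Function.uncurry G') := by
    apply measurable_uncurry_of_continuous_of_measurable
    · intro p
      by_cases hp : p ∈ S
      · simp only [G', hp, if_true]; exact continuous_const
      · simp only [G', hp, if_false]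
        by_contra hcon
        exact hp (hS hcon)
    · intro e
      exact Measurable.ite hSm measurable_const (hm e)
  refine ⟨fun p => G' (η p) p, h1.comp (hη.prodMk measurable_id), ?_⟩
  have : ∀ᵐ p ∂μ, p ∉ S := by
    rw [ae_iff]; simpa using hS0
  filter_upwards [this] with p hp
  simp [G', hp]

lemma nConj_bdd {d : ℕ} (M : ℝ × EuclideanSpace ℝ (Fin d) → EuclideanSpace ℝ (Fin d) → ℝ)
    (p : ℝ × EuclideanSpace ℝ (Fin d)) (m₁ : ℝ → ℝ) (hm : IsYoung m₁)
    (h : ∀ ξ, m₁ ‖ξ‖ ≤ M p ξ) (η : EuclideanSpace ℝ (Fin d)) :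
    BddAbove (Set.range fun ξ => (@inner ℝ _ _ ξ η) - M p ξ) := by
  obtain ⟨h0, -, -, -, h4⟩ := hm
  obtain ⟨R, hR⟩ := (h4.eventually_ge_atTop ‖η‖).exists_forall_of_atTop
  refine ⟨max R 1 * ‖η‖, ?_⟩
  rintro _ ⟨ζ, rfl⟩
  have h1 := real_inner_le_norm ζ η
  have h2 := h ζ
  have h3 := h0 ‖ζ‖ (norm_nonneg _)
  have hn := norm_nonneg η
  dsimp only
  rcases le_total ‖ζ‖ (max R 1) with hle | hle
  · have := mul_le_mul_of_nonneg_right hle hn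
    linarith
  · have hpos : 0 < ‖ζ‖ := lt_of_lt_of_le (by positivity) hle
    have h5 := hR ‖ζ‖ ((le_max_left _ _).trans hle)
    rw [le_div_iff₀ hpos] at h5
    have : 0 ≤ max R 1 * ‖η‖ := by positivity
    nlinarith

lemma young_le {d : ℕ} (M : ℝ × EuclideanSpace ℝ (Fin d) → EuclideanSpace ℝ (Fin d) → ℝ)
    (p : ℝ × EuclideanSpace ℝ (Fin d)) (m₁ : ℝ → ℝ) (hm : IsYoung m₁)
    (h : ∀ ξ, m₁ ‖ξ‖ ≤ M p ξ) (η ξ : EuclideanSpace ℝ (Fin d)) :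
    (@inner ℝ _ _ ξ η) ≤ M p ξ + nConj M p η := by
  have := le_csSup (nConj_bdd M p m₁ hm h η) ⟨ξ, rfl⟩
  unfold nConj
  dsimp only at this
  linarith

lemma A_bound {d : ℕ} (M : ℝ × EuclideanSpace ℝ (Fin d) → EuclideanSpace ℝ (Fin d) → ℝ)
    (p : ℝ × EuclideanSpace ℝ (Fin d)) (m₁ m₂ : ℝ → ℝ) (hm : IsYoung m₁) (hm2 : IsYoung m₂)
    (h : ∀ ξ, m₁ ‖ξ‖ ≤ M p ξ ∧ M p ξ ≤ m₂ ‖ξ‖) (a ξ : EuclideanSpace ℝ (Fin d))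
    (c hb hp R : ℝ) (hc : 0 < c) (hh : |hp| ≤ hb)
    (hA2 : M p ξ + nConj M p a ≤ c * (@inner ℝ _ _ a ξ) + hp) (hR : ‖ξ‖ ≤ R) :
    ‖a‖ ≤ m₂ (c * R + 1) + hb := by
  have hR0 : 0 ≤ R := (norm_nonneg _).trans hR
  have hs : 0 ≤ c * R + 1 := by positivity
  have hb0 : 0 ≤ hb := (abs_nonneg _).trans hh
  by_cases ha : a = 0
  · subst ha
    have := hm2.1 _ hs
    simp; linarith
  have hapos : 0 < ‖a‖ := norm_pos_iff.2 ha
  have h1 := young_le M p m₁ hm (fun ξ => (h ξ).1) a (((c * R + 1) * ‖a‖⁻¹) • a)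
  have h2 := (h (((c * R + 1) * ‖a‖⁻¹) • a)).2
  have h3 : ‖((c * R + 1) * ‖a‖⁻¹) • a‖ = c * R + 1 := by
    rw [norm_smul, Real.norm_of_nonneg (by positivity)]
    field_simp
  rw [h3] at h2
  rw [real_inner_smul_left, real_inner_self_eq_norm_sq] at h1
  have h4 : (c * R + 1) * ‖a‖⁻¹ * ‖a‖ ^ 2 = (c * R + 1) * ‖a‖ := by field_simp
  rw [h4] at h1
  have h5 := real_inner_le_norm a ξ
  have h6 : ‖a‖ * ‖ξ‖ ≤ ‖a‖ * R := by gcongr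
  have h7 : c * (@inner ℝ _ _ a ξ) ≤ c * (‖a‖ * R) := by gcongr; linarith
  have h8 := (h ξ).1
  have h9 := hm.1 ‖ξ‖ (norm_nonneg _)
  have h10 := (abs_le.1 hh).2
  nlinarith

lemma integrable_pair {d : ℕ} (μ : Measure (ℝ × EuclideanSpace ℝ (Fin d)))
    (M : ℝ × EuclideanSpace ℝ (Fin d) → EuclideanSpace ℝ (Fin d) → ℝ)
    (hM : IsNFunction μ M)
    (α : ℝ × EuclideanSpace ℝ (Fin d) → EuclideanSpace ℝ (Fin d)) (hαm : Measurable α)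
    (hαL : ∃ lam > (0 : ℝ), ∫⁻ p, ENNReal.ofReal (nConj M p (lam⁻¹ • α p)) ∂μ < ⊤)
    (ξf : ℝ × EuclideanSpace ℝ (Fin d) → EuclideanSpace ℝ (Fin d)) (hξm : Measurable ξf)
    (hξL : ∃ lam > (0 : ℝ), ∫⁻ p, ENNReal.ofReal (M p (lam⁻¹ • ξf p)) ∂μ < ⊤) :
    Integrable (fun p => (@inner ℝ _ _ (α p) (ξf p))) μ := by
  obtain ⟨l1, hl1, h1⟩ := hαL
  obtain ⟨l2, hl2, h2⟩ := hξL
  obtain ⟨hev, hcont, hmeas, -, m₁, m₂, hm1, hm2, hle⟩ := hM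
  refine ⟨(hαm.inner hξm).aestronglyMeasurable, ?_⟩
  rw [hasFiniteIntegral_iff_norm]
  have hae : AEMeasurable (fun p => ENNReal.ofReal (M p (l2⁻¹ • ξf p))) μ :=
    (cara_aemeas M hcont hmeas (fun p => l2⁻¹ • ξf p) (by exact hξm.const_smul l2⁻¹)).ennreal_ofReal
  have key : ∀ᵐ p ∂μ, ENNReal.ofReal ‖(@inner ℝ _ _ (α p) (ξf p))‖ ≤
      ENNReal.ofReal (l1 * l2) * (ENNReal.ofReal (M p (l2⁻¹ • ξf p)) +
        ENNReal.ofReal (nConj M p (l1⁻¹ • α p))) := by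
    filter_upwards [hev, hle] with p hp hl
    have hY := young_le M p m₁ hm1 (fun ξ => (hl ξ).1) (l1⁻¹ • α p)
    have e1 := hY (l2⁻¹ • ξf p)
    have e2 := hY (-(l2⁻¹ • ξf p))
    rw [← hp] at e2
    rw [inner_neg_left] at e2
    have e3 : (@inner ℝ _ _ (l2⁻¹ • ξf p) (l1⁻¹ • α p)) = (l1 * l2)⁻¹ *
        (@inner ℝ _ _ (α p) (ξf p)) := by
      rw [real_inner_smul_left, real_inner_smul_right, real_inner_comm, mul_inv]; ring
    have e4 : |(@inner ℝ _ _ (l2⁻¹ • ξf p) (l1⁻¹ • α p))| ≤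
        M p (l2⁻¹ • ξf p) + nConj M p (l1⁻¹ • α p) := abs_le.2 ⟨by linarith, e1⟩
    rw [e3, abs_mul, abs_of_pos (by positivity), inv_mul_le_iff₀ (by positivity)] at e4
    rw [Real.norm_eq_abs]
    refine (ENNReal.ofReal_le_ofReal e4).trans ?_
    rw [ENNReal.ofReal_mul (by positivity)]
    gcongr
    exact ENNReal.ofReal_add_le
  refine (lintegral_mono_ae key).trans_lt ?_
  rw [lintegral_const_mul' _ _ ENNReal.ofReal_ne_top, lintegral_add_left' hae]
  exact ENNReal.mul_lt_top ENNReal.ofReal_lt_top (ENNReal.add_lt_top.2 ⟨h2, h1⟩)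

/-- The core of the argument, for one cut-off `w = ψ ∘ snd` and an abstract finite measure. -/
lemma core {d : ℕ} (μ : Measure (ℝ × EuclideanSpace ℝ (Fin d))) [IsFiniteMeasure μ]
    (A : ℝ × EuclideanSpace ℝ (Fin d) → EuclideanSpace ℝ (Fin d) → EuclideanSpace ℝ (Fin d))
    (hAc : ∀ᵐ p ∂μ, Continuous (A p)) (hAm : ∀ ξ, Measurable fun p => A p ξ)
    (hAb : ∀ R : ℝ, ∃ C : ℝ, ∀ᵐ p ∂μ, ∀ ξ, ‖ξ‖ ≤ R → ‖A p ξ‖ ≤ C)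
    (hA4 : ∀ᵐ p ∂μ, A p 0 = 0)
    (α ξf : ℝ × EuclideanSpace ℝ (Fin d) → EuclideanSpace ℝ (Fin d)) (hαm : Measurable α)
    (hξm : Measurable ξf) (hint : Integrable (fun p => (@inner ℝ _ _ (α p) (ξf p))) μ)
    (w : ℝ × EuclideanSpace ℝ (Fin d) → ℝ) (hw : Measurable w) (hw01 : ∀ p, 0 ≤ w p ∧ w p ≤ 1)
    (hmono : ∀ η : ℝ × EuclideanSpace ℝ (Fin d) → EuclideanSpace ℝ (Fin d),
      Measurable η → (∃ B : ℝ, ∀ p, ‖η p‖ ≤ B) →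
        0 ≤ ∫ p, (@inner ℝ _ _ (α p - A p (η p)) (ξf p - η p)) * w p ∂μ) :
    ∀ᵐ p ∂μ, w p ≠ 0 → A p (ξf p) = α p := by
  classical
  suffices H : ∀ j : ℕ, ∀ᵐ p ∂μ, (‖ξf p‖ ≤ j ∧ ‖α p‖ ≤ j) → w p ≠ 0 → A p (ξf p) = α p by
    rw [← ae_all_iff] at H
    filter_upwards [H] with p hp
    obtain ⟨j, hj⟩ := exists_nat_ge (max ‖ξf p‖ ‖α p‖)
    exact hp j ⟨(le_max_left _ _).trans hj, (le_max_right _ _).trans hj⟩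
  intro j
  let E : Set (ℝ × EuclideanSpace ℝ (Fin d)) := {p | ‖ξf p‖ ≤ j ∧ ‖α p‖ ≤ j}
  have hE : MeasurableSet E :=
    (measurableSet_le hξm.norm measurable_const).inter (measurableSet_le hαm.norm measurable_const)
  obtain ⟨C, hC⟩ := hAb (j + 1)
  have hAη : ∀ η : ℝ × EuclideanSpace ℝ (Fin d) → EuclideanSpace ℝ (Fin d), Measurable η →
      AEMeasurable (fun p => A p (η p)) μ := fun η hη => cara_aemeas A hAc hAm η hη
  -- bound for the integrand on `E`
  have hbd : ∀ (z : ℝ × EuclideanSpace ℝ (Fin d) → EuclideanSpace ℝ (Fin d)),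
      (∀ p, ‖z p‖ ≤ 1) → ∀ s : ℝ, 0 ≤ s → s ≤ 1 → ∀ᵐ p ∂μ,
      ‖E.indicator (fun p => (@inner ℝ _ _ (α p - A p (ξf p + s • z p)) (z p)) * w p) p‖
        ≤ j + |C| := by
    intro z hz s hs0 hs1
    filter_upwards [hC] with p hp
    by_cases hpE : p ∈ E
    · rw [indicator_of_mem hpE, norm_mul]
      have h1 : ‖ξf p + s • z p‖ ≤ j + 1 := by
        refine (norm_add_le _ _).trans (add_le_add hpE.1 ?_)
        rw [norm_smul, Real.norm_of_nonneg hs0]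
        exact mul_le_one₀ hs1 (norm_nonneg _) (hz p)
      have h2 := (hp _ h1).trans (le_abs_self C)
      have h3 : ‖α p - A p (ξf p + s • z p)‖ ≤ j + |C| :=
        (norm_sub_le _ _).trans (add_le_add hpE.2 h2)
      have h4 := norm_inner_le_norm (𝕜 := ℝ) (α p - A p (ξf p + s • z p)) (z p)
      have h5 : ‖w p‖ ≤ 1 := by rw [Real.norm_of_nonneg (hw01 p).1]; exact (hw01 p).2
      have h6 : ‖α p - A p (ξf p + s • z p)‖ * ‖z p‖ ≤ (j + |C|) * 1 := by
        gcongr; exact hz p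
      calc _ ≤ ((j + |C|) * 1) * 1 := by gcongr; exact h4.trans h6
        _ = _ := by ring
    · rw [indicator_of_notMem hpE, norm_zero]; positivity
  have hms : ∀ (z : ℝ × EuclideanSpace ℝ (Fin d) → EuclideanSpace ℝ (Fin d)),
      Measurable z → ∀ s : ℝ, AEStronglyMeasurable
      (E.indicator (fun p => (@inner ℝ _ _ (α p - A p (ξf p + s • z p)) (z p)) * w p)) μ := by
    intro z hz s
    refine (AEMeasurable.aestronglyMeasurable ?_).indicator hE
    exact ((hαm.aemeasurable.sub (hAη _ (hξm.add (hz.const_smul s)))).inner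
      hz.aemeasurable).mul hw.aemeasurable
  -- first limit
  have step1 : ∀ (z : ℝ × EuclideanSpace ℝ (Fin d) → EuclideanSpace ℝ (Fin d)),
      Measurable z → (∀ p, ‖z p‖ ≤ 1) → ∀ s : ℝ, 0 < s → s ≤ 1 →
      ∫ p, E.indicator (fun p => (@inner ℝ _ _ (α p - A p (ξf p + s • z p)) (z p)) * w p) p ∂μ
        ≤ 0 := by
    intro z hzm hz s hs0 hs1
    set g := E.indicator (fun p => (@inner ℝ _ _ (α p - A p (ξf p + s • z p)) (z p)) * w p)
      with hg
    have hgi : Integrable g μ :=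
      Integrable.of_bound (hms z hzm s) _ (hbd z hz s hs0.le hs1)
    let f : ℕ → ℝ × EuclideanSpace ℝ (Fin d) → ℝ := fun i =>
      {p | (i : ℝ) < ‖ξf p‖}.indicator (fun p => (@inner ℝ _ _ (α p) (ξf p)) * w p)
    have hSi : ∀ i : ℕ, MeasurableSet {p | (i : ℝ) < ‖ξf p‖} := fun i =>
      measurableSet_lt measurable_const hξm.norm
    have hfm : ∀ i, AEStronglyMeasurable (f i) μ := fun i =>
      (((hαm.inner hξm).mul hw).aestronglyMeasurable).indicator (hSi i)
    have hfb : ∀ i p, ‖f i p‖ ≤ ‖(@inner ℝ _ _ (α p) (ξf p))‖ := by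
      intro i p
      refine (norm_indicator_le_norm_self _ _).trans ?_
      rw [norm_mul]
      refine mul_le_of_le_one_right (norm_nonneg _) ?_
      rw [Real.norm_of_nonneg (hw01 p).1]; exact (hw01 p).2
    have hfi : ∀ i, Integrable (f i) μ := fun i =>
      hint.norm.mono' (hfm i) (Eventually.of_forall (hfb i))
    have hlim : Tendsto (fun i => ∫ p, f i p ∂μ) atTop (nhds (∫ _, (0 : ℝ) ∂μ)) := by
      refine tendsto_integral_of_dominated_convergence _ hfm hint.norm
        (fun i => Eventually.of_forall (hfb i)) (Eventually.of_forall fun p => ?_)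
      refine tendsto_const_nhds.congr' ?_
      obtain ⟨N, hN⟩ := exists_nat_ge ‖ξf p‖
      filter_upwards [eventually_ge_atTop N] with i hi
      have : (N : ℝ) ≤ i := by exact_mod_cast hi
      have hni : p ∉ {p | (i : ℝ) < ‖ξf p‖} := by
        simp only [mem_ofPred_eq, not_lt]; linarith
      simp only [f, indicator_of_notMem hni]
    have hineq : ∀ᶠ i : ℕ in atTop, s * ∫ p, g p ∂μ ≤ ∫ p, f i p ∂μ := by
      filter_upwards [eventually_ge_atTop j] with i hi
      have hij : (j : ℝ) ≤ i := by exact_mod_cast hi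
      let η : ℝ × EuclideanSpace ℝ (Fin d) → EuclideanSpace ℝ (Fin d) := fun p =>
        {p | (i : ℝ) < ‖ξf p‖}ᶜ.indicator ξf p + E.indicator (fun p => s • z p) p
      have hηm : Measurable η :=
        (hξm.indicator (hSi i).compl).add ((hzm.const_smul s).indicator hE)
      have hηb : ∀ p, ‖η p‖ ≤ i + 1 := by
        intro p
        refine (norm_add_le _ _).trans (add_le_add ?_ ?_)
        · by_cases hp : (i : ℝ) < ‖ξf p‖
          · rw [indicator_of_notMem (by simpa using hp), norm_zero]; positivity
          · rw [indicator_of_mem (by simpa using hp)]; linarith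
        · refine (norm_indicator_le_norm_self _ _).trans ?_
          rw [norm_smul, Real.norm_of_nonneg hs0.le]
          exact mul_le_one₀ hs1 (norm_nonneg _) (hz p)
      have h0 := hmono η hηm ⟨_, hηb⟩
      have heq : ∫ p, (@inner ℝ _ _ (α p - A p (η p)) (ξf p - η p)) * w p ∂μ =
          ∫ p, (f i p - s * g p) ∂μ := by
        refine integral_congr_ae ?_
        filter_upwards [hA4] with p hp4
        by_cases hp : (i : ℝ) < ‖ξf p‖
        · have hpE : p ∉ E := fun hh => by have := hh.1; linarith
          have e1 : η p = 0 := by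
            simp only [η]
            rw [indicator_of_notMem (by simpa using hp), indicator_of_notMem hpE, add_zero]
          have e2 : f i p = (@inner ℝ _ _ (α p) (ξf p)) * w p :=
            indicator_of_mem (show p ∈ {p | (i : ℝ) < ‖ξf p‖} from hp) _
          have e3 : g p = 0 := indicator_of_notMem hpE _
          rw [e1, e2, e3, hp4]; simp
        · have e2 : f i p = 0 :=
            indicator_of_notMem (show p ∉ {p | (i : ℝ) < ‖ξf p‖} from hp) _
          by_cases hpE : p ∈ E
          · have e1 : η p = ξf p + s • z p := by
              simp only [η]
              rw [indicator_of_mem (by simpa using hp), indicator_of_mem hpE]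
            have e3 : g p = (@inner ℝ _ _ (α p - A p (ξf p + s • z p)) (z p)) * w p :=
              indicator_of_mem hpE _
            have e4 : ξf p - (ξf p + s • z p) = -(s • z p) := by abel
            rw [e1, e2, e3, e4, inner_neg_right, real_inner_smul_right]; ring
          · have e1 : η p = ξf p := by
              simp only [η]
              rw [indicator_of_mem (by simpa using hp), indicator_of_notMem hpE, add_zero]
            have e3 : g p = 0 := indicator_of_notMem hpE _
            rw [e1, e2, e3]; simp
      rw [heq, integral_sub (hfi i) (hgi.const_mul s), integral_const_mul] at h0
      linarith
    have := ge_of_tendsto hlim hineq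
    rw [integral_zero] at this
    exact nonpos_of_mul_nonpos_right this hs0
  -- second limit
  have step2 : ∀ (z : ℝ × EuclideanSpace ℝ (Fin d) → EuclideanSpace ℝ (Fin d)),
      Measurable z → (∀ p, ‖z p‖ ≤ 1) →
      ∫ p, E.indicator (fun p => (@inner ℝ _ _ (α p - A p (ξf p + (0 : ℝ) • z p)) (z p)) * w p) p ∂μ
        ≤ 0 := by
    intro z hzm hz
    have hs0 : ∀ n : ℕ, (0 : ℝ) < 1 / ((n : ℝ) + 1) := fun n => by positivity
    have hs1 : ∀ n : ℕ, 1 / ((n : ℝ) + 1) ≤ 1 := fun n => by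
      rw [div_le_one (by positivity)]; linarith [(Nat.cast_nonneg n : (0 : ℝ) ≤ n)]
    have hlim : Tendsto (fun n : ℕ => ∫ p, E.indicator (fun p =>
        (@inner ℝ _ _ (α p - A p (ξf p + (1 / ((n : ℝ) + 1)) • z p)) (z p)) * w p) p ∂μ) atTop
        (nhds (∫ p, E.indicator (fun p =>
          (@inner ℝ _ _ (α p - A p (ξf p + (0 : ℝ) • z p)) (z p)) * w p) p ∂μ)) := by
      refine tendsto_integral_of_dominated_convergence (fun _ => (j : ℝ) + |C|)
        (fun n => hms z hzm _) (integrable_const _)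
        (fun n => hbd z hz _ (hs0 n).le (hs1 n)) ?_
      filter_upwards [hAc] with p hp
      by_cases hpE : p ∈ E
      · simp only [indicator_of_mem hpE]
        have hcont : Continuous (fun s : ℝ =>
            (@inner ℝ _ _ (α p - A p (ξf p + s • z p)) (z p)) * w p) := by fun_prop
        exact (hcont.tendsto 0).comp tendsto_one_div_add_atTop_nhds_zero_nat
      · simp only [indicator_of_notMem hpE]; exact tendsto_const_nhds
    exact le_of_tendsto' hlim fun n => step1 z hzm hz _ (hs0 n) (hs1 n)
  -- choice of the direction
  have hv : AEMeasurable (fun p => α p - A p (ξf p)) μ := hαm.aemeasurable.sub (hAη _ hξm)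
  let v := hv.mk _
  have hvm : Measurable v := hv.measurable_mk
  let z : ℝ × EuclideanSpace ℝ (Fin d) → EuclideanSpace ℝ (Fin d) :=
    fun p => (1 + ‖v p‖)⁻¹ • v p
  have hzm : Measurable z := ((measurable_const.add hvm.norm).inv).smul hvm
  have hz : ∀ p, ‖z p‖ ≤ 1 := by
    intro p
    have := norm_nonneg (v p)
    rw [norm_smul, norm_inv, Real.norm_of_nonneg (by positivity), inv_mul_le_iff₀ (by positivity)]
    linarith
  have hle := step2 z hzm hz
  have hae : (E.indicator (fun p =>
      (@inner ℝ _ _ (α p - A p (ξf p + (0 : ℝ) • z p)) (z p)) * w p)) =ᵐ[μ]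
      E.indicator (fun p => (1 + ‖v p‖)⁻¹ * ‖v p‖ ^ 2 * w p) := by
    filter_upwards [hv.ae_eq_mk] with p hp
    by_cases hpE : p ∈ E
    · simp only [indicator_of_mem hpE, zero_smul, add_zero]
      have hp' : α p - A p (ξf p) = v p := hp
      rw [hp']
      simp only [z]
      rw [real_inner_smul_right, real_inner_self_eq_norm_sq]
    · simp only [indicator_of_notMem hpE]
  have hnn : 0 ≤ E.indicator (fun p => (1 + ‖v p‖)⁻¹ * ‖v p‖ ^ 2 * w p) := by
    intro p
    refine indicator_nonneg (fun p _ => ?_) p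
    have := (hw01 p).1
    positivity
  have hgi : Integrable (E.indicator (fun p =>
      (@inner ℝ _ _ (α p - A p (ξf p + (0 : ℝ) • z p)) (z p)) * w p)) μ :=
    Integrable.of_bound (hms z hzm 0) _ (hbd z hz 0 le_rfl zero_le_one)
  have hgi2 := hgi.congr hae
  rw [integral_congr_ae hae] at hle
  have h0 := (integral_eq_zero_iff_of_nonneg hnn hgi2).1 (le_antisymm hle (integral_nonneg hnn))
  filter_upwards [h0, hv.ae_eq_mk] with p hp hpv hpE hwp
  have hpE' : p ∈ E := hpE
  rw [indicator_of_mem hpE'] at hp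
  have hp' : α p - A p (ξf p) = v p := hpv
  have hpos : (1 + ‖v p‖)⁻¹ ≠ 0 := by have := norm_nonneg (v p); positivity
  have h2 : ‖v p‖ ^ 2 = 0 := by
    simpa [hpos, hwp] using hp
  have h3 : v p = 0 := by simpa using h2
  rw [h3] at hp'
  exact (sub_eq_zero.1 hp').symm

/-- Local monotonicity trick: if
`∫_{Ω_T} (α − A(t,x,η))·(ξ − η) ψ ≥ 0` for all bounded measurable `η` and all
`ψ ∈ C_c^∞(Ω)` with `0 ≤ ψ ≤ 1`, then `A(t,x,ξ(t,x)) = α(t,x)` a.e. in `Ω_T`. -/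
theorem monotonicity_trick {d : ℕ}
    (Ω : Set (EuclideanSpace ℝ (Fin d))) (T : ℝ) (hT : 0 < T)
    (hΩo : IsOpen Ω) (hΩb : Bornology.IsBounded Ω) (hΩne : Ω.Nonempty)
    (M : ℝ × EuclideanSpace ℝ (Fin d) → EuclideanSpace ℝ (Fin d) → ℝ)
    (hM : IsNFunction (parMeasure Ω T) M)
    (A : ℝ × EuclideanSpace ℝ (Fin d) → EuclideanSpace ℝ (Fin d) → EuclideanSpace ℝ (Fin d))
    -- (A1) Carathéodory
    (hA1cont : ∀ᵐ p ∂(parMeasure Ω T), Continuous (A p))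
    (hA1meas : ∀ ξ, Measurable fun p => A p ξ)
    -- (A2) coercivity and growth
    (c : ℝ) (hc : 0 < c) (h : ℝ × EuclideanSpace ℝ (Fin d) → ℝ) (hhm : Measurable h)
    (hb : ℝ) (hhb : ∀ᵐ p ∂(parMeasure Ω T), |h p| ≤ hb)
    (hA2 : ∀ᵐ p ∂(parMeasure Ω T), ∀ ξ,
      M p ξ + nConj M p (A p ξ) ≤ c * (@inner ℝ _ _ (A p ξ) ξ) + h p)
    -- (A3) monotonicity
    (hA3 : ∀ᵐ p ∂(parMeasure Ω T), ∀ ξ η,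
      0 ≤ (@inner ℝ _ _ (A p ξ - A p η) (ξ - η)))
    -- (A4)
    (hA4 : ∀ᵐ p ∂(parMeasure Ω T), A p 0 = 0)
    -- α ∈ L_{M*}(Ω_T), ξf ∈ L_M(Ω_T)
    (α : ℝ × EuclideanSpace ℝ (Fin d) → EuclideanSpace ℝ (Fin d)) (hαm : Measurable α)
    (hαL : ∃ lam > (0 : ℝ),
      ∫⁻ p, ENNReal.ofReal (nConj M p (lam⁻¹ • α p)) ∂(parMeasure Ω T) < ⊤)
    (ξf : ℝ × EuclideanSpace ℝ (Fin d) → EuclideanSpace ℝ (Fin d)) (hξm : Measurable ξf)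
    (hξL : ∃ lam > (0 : ℝ),
      ∫⁻ p, ENNReal.ofReal (M p (lam⁻¹ • ξf p)) ∂(parMeasure Ω T) < ⊤)
    -- the monotonicity inequality tested against bounded η and cut-offs ψ
    (hmono : ∀ η : ℝ × EuclideanSpace ℝ (Fin d) → EuclideanSpace ℝ (Fin d),
      Measurable η → (∃ B : ℝ, ∀ p, ‖η p‖ ≤ B) →
      ∀ ψ : EuclideanSpace ℝ (Fin d) → ℝ, ContDiff ℝ (⊤ : ℕ∞) ψ → HasCompactSupport ψ →
        tsupport ψ ⊆ Ω → (∀ x, 0 ≤ ψ x ∧ ψ x ≤ 1) →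
        0 ≤ ∫ p, (@inner ℝ _ _ (α p - A p (η p)) (ξf p - η p)) * ψ p.2 ∂(parMeasure Ω T)) :
    ∀ᵐ p ∂(parMeasure Ω T), A p (ξf p) = α p := by
  have hfin : IsFiniteMeasure (parMeasure Ω T) := by
    refine ⟨?_⟩
    unfold parMeasure
    rw [Measure.restrict_apply_univ]
    exact ((Metric.isBounded_Ioo 0 T).prod hΩb).measure_lt_top
  have hint := integrable_pair _ M hM α hαm hαL ξf hξm hξL
  have hAb : ∀ R : ℝ, ∃ C : ℝ, ∀ᵐ p ∂(parMeasure Ω T), ∀ ξ, ‖ξ‖ ≤ R → ‖A p ξ‖ ≤ C := by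
    intro R
    obtain ⟨-, -, -, -, m₁, m₂, hm1, hm2, hle⟩ := hM
    refine ⟨m₂ (c * R + 1) + hb, ?_⟩
    filter_upwards [hle, hhb, hA2] with p h1 h2 h3 ξ hξ
    exact A_bound M p m₁ m₂ hm1 hm2 h1 (A p ξ) ξ c hb (h p) R hc h2 (h3 ξ) hξ
  have hloc : ∀ x ∈ Ω, ∃ U ∈ nhds x, ∀ᵐ p ∂(parMeasure Ω T), p.2 ∈ U → A p (ξf p) = α p := by
    intro x hx
    obtain ⟨ψ, h1, h2, h3, h4, h5⟩ :=
      exists_contDiff_tsupport_subset (n := (⊤ : ℕ∞)) (hΩo.mem_nhds hx)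
    have h01 : ∀ x, 0 ≤ ψ x ∧ ψ x ≤ 1 := fun y => h4 (mem_range_self y)
    refine ⟨{y | ψ y ≠ 0}, ?_, ?_⟩
    · exact (isOpen_ne_fun h3.continuous continuous_const).mem_nhds (by simp [h5])
    · exact core _ A hA1cont hA1meas hAb hA4 α ξf hαm hξm hint (fun p => ψ p.2)
        (h3.continuous.measurable.comp measurable_snd) (fun p => h01 p.2)
        (fun η hη hB => hmono η hη hB ψ h3 h2 h1 h01)
  choose! U hU hUae using hloc
  obtain ⟨t, htΩ, htc, hcov⟩ := TopologicalSpace.countable_cover_nhdsWithin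
    (f := U) (s := Ω) (fun x hx => mem_nhdsWithin_of_mem_nhds (hU x hx))
  have hall : ∀ᵐ p ∂(parMeasure Ω T), ∀ x ∈ t, p.2 ∈ U x → A p (ξf p) = α p :=
    (ae_ball_iff htc).2 fun x hx => hUae x (htΩ hx)
  have hmem : ∀ᵐ p ∂(parMeasure Ω T), p ∈ Set.Ioo 0 T ×ˢ Ω :=
    ae_restrict_mem (measurableSet_Ioo.prod hΩo.measurableSet)
  filter_upwards [hall, hmem] with p hp hpm
  obtain ⟨x, hx, hxU⟩ := mem_iUnion₂.1 (hcov hpm.2)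
  exact hp x hx hxU
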